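/- arXiv:2211.05460 — 2 statements merged into one kernel-verified Lean document; each statement's English description precedes it below -/
import Mathlib

section
/- For every integer k ≥ 2, the following identity of formal power series in x with coefficients in ℤ[p,q] holds: (1 − (p³q² + p⁵q³)·x + (p⁸q⁵ − p⁹q⁶)·x² + p^{5k+4} q^{3k+3}·x^{k+1}) · Σ_{n≥1} ( Σ_{w ∈ F_{n,k}} p^{edg(w)} q^{ver(w)} ) xⁿ = p²q³·( (p²q + p⁵q³)·x − (p⁷q⁴ − p⁸q⁵)·x² − p^{5k} q^{3k}·x^{k} − p^{5k+3} q^{3k+2}·x^{k+1} ). -/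
open Finset

/-- Number of `1`s in a binary word. -/
def wOnes (w : List Bool) : ℕ := w.count true

/-- Number of maximal runs (blocks) of consecutive `1`s in a binary word. -/
def wRuns (w : List Bool) : ℕ := w.count true - (w.zip w.tail).count (true, true)

/-- The set `F_{n,k}` of binary words of length `n` avoiding `k` consecutive `1`s. -/
def kbonWords (n k : ℕ) : Finset (Fin n → Bool) :=
  Finset.univ.filter (fun w => ¬ (List.replicate k true <:+: List.ofFn w))

/-- The polynomial ring `ℤ[p,q]`. -/
abbrev Rpq : Type := MvPolynomial (Fin 2) ℤ

noncomputable def pvar : Rpq := MvPolynomial.X 0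
noncomputable def qvar : Rpq := MvPolynomial.X 1

/-- Number of vertices of the `k`-bonacci graph of a word `w` of length `n`:
`ver(w) = 2n + 2 + s(w) + b(w)`. -/
def wVer (n : ℕ) (w : List Bool) : ℕ := 2 * n + 2 + wOnes w + wRuns w

/-- Number of edges of the `k`-bonacci graph of a word `w` of length `n`:
`edg(w) = 3n + 1 + 2s(w) + b(w)`. -/
def wEdg (n : ℕ) (w : List Bool) : ℕ := 3 * n + 1 + 2 * wOnes w + wRuns w

/-!
Each letter `0` of a word contributes 3 edges and 2 vertices to its graph, each letter `1`
contributes 5 edges and 3 vertices, and each run of `1`s one more edge and one more vertex; the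
left border accounts for the remaining edge and 2 vertices. So the weights to be summed are
`p q² · a^(#0) b^(#1) c^(#runs)` with `a = p³q²`, `b = p⁵q³` and `c = pq`.

A word is, in a unique way, either `1^j` or `1^j 0 w`; it is `k`-bonacci iff `j < k` and `w` is
`k`-bonacci, and weights multiply across the letter `0`. Hence the generating function `G` of the
weights `a^(#0) b^(#1) c^(#runs)` of all `k`-bonacci words satisfies `G = P (1 + a x G)`, where
`P = 1 + c (b x + ⋯ + (b x)^(k-1))`, and multiplying by `1 - b x` makes `P` a closed form.
-/

open PowerSeries

section Words

lemma isInfix_append_cons_iff_of_notMem {α : Type*} {a : α} {l : List α} (ha : a ∉ l)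
    (u v : List α) :
    l <:+: u ++ a :: v ↔ l <:+: u ∨ l <:+: v := by
  have hprefix {m : List α} (hm : a ∉ m) (h : m <+: a :: v) : m = [] := by
    rcases List.prefix_cons_iff.mp h with rfl | ⟨t, rfl, -⟩
    · rfl
    · exact absurd List.mem_cons_self hm
  constructor
  · intro h
    rcases List.infix_append_iff.mp h with h | h | ⟨l₁, l₂, rfl, h₁, h₂⟩
    · exact .inl h
    · rcases List.infix_cons_iff.mp h with h | h
      · exact .inr (hprefix ha h ▸ List.nil_infix)
      · exact .inr h
    · obtain rfl := hprefix (fun h => ha (List.mem_append_right _ h)) h₂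
      exact .inl (by simpa using h₁.isInfix)
  · rintro (h | h)
    · exact List.infix_append_of_infix_left h
    · exact List.infix_append_of_infix_right (List.infix_cons h)

lemma count_zip_tail_le_count_tail {α : Type*} [DecidableEq α] (a b : α) (l : List α) :
    (l.zip l.tail).count (a, b) ≤ l.tail.count b := by
  simpa [List.map_snd_zip] using
    List.count_le_count_map (l := l.zip l.tail) (f := Prod.snd) (x := (a, b))

lemma wRuns_nil : wRuns [] = 0 := rfl

lemma wRuns_singleton_true : wRuns [true] = 1 := rfl

lemma wRuns_cons_false (l : List Bool) : wRuns (false :: l) = wRuns l := by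
  cases l <;> simp [wRuns]

lemma wRuns_cons_true_cons_true (l : List Bool) :
    wRuns (true :: true :: l) = wRuns (true :: l) := by
  simp [wRuns]

lemma wRuns_cons_true_cons_false (l : List Bool) :
    wRuns (true :: false :: l) = wRuns l + 1 := by
  -- Needed because the subtraction in `wRuns` is truncated.
  have hle : (l.zip l.tail).count (true, true) ≤ l.count true :=
    (count_zip_tail_le_count_tail true true l).trans (l.tail_sublist.count_le true)
  have hruns : wRuns (true :: false :: l) =
      l.count true + 1 - (l.zip l.tail).count (true, true) := by
    cases l <;> simp [wRuns]
  rw [hruns, wRuns, Nat.sub_add_comm hle]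

lemma wRuns_append_false_cons (u v : List Bool) :
    wRuns (u ++ false :: v) = wRuns u + wRuns v := by
  induction u with
  | nil => simp [wRuns_cons_false, wRuns_nil]
  | cons x u ih =>
    match x, u with
    | false, u => simpa [wRuns_cons_false] using ih
    | true, [] => simp [wRuns_cons_true_cons_false, wRuns_singleton_true, add_comm]
    | true, true :: u => simpa [wRuns_cons_true_cons_true] using ih
    | true, false :: u =>
      simp only [List.cons_append, wRuns_cons_false] at ih
      simp [wRuns_cons_true_cons_false, ih, add_right_comm]

lemma wRuns_replicate_succ (j : ℕ) : wRuns (List.replicate (j + 1) true) = 1 := by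
  induction j with
  | zero => exact wRuns_singleton_true
  | succ j ih => rwa [List.replicate_succ, List.replicate_succ, wRuns_cons_true_cons_true]

end Words

section WordSeries

variable {R α : Type*} [Semiring R] [Fintype α]

/-- The generating function `∑ f(w) x^|w|` of a weight `f` over all words in a finite alphabet,
a word of length `n` being encoded as a function `Fin n → α`. -/
def wordSeries (f : List α → R) : R⟦X⟧ :=
  PowerSeries.mk fun n => ∑ w : Fin n → α, f (List.ofFn w)

lemma wordSeries_const_mul (r : R) (f : List α → R) :
    wordSeries (fun w => r * f w) = C r * wordSeries f := by
  ext n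
  simp [wordSeries, Finset.mul_sum]

lemma wordSeries_eq_add_X_mul_sum (f : List α → R) :
    wordSeries f = C (f []) + X * ∑ a, wordSeries fun w => f (a :: w) := by
  ext n
  cases n with
  | zero => simp [wordSeries]
  | succ n =>
    have hsplit : ∑ w : Fin (n + 1) → α, f (List.ofFn w) =
        ∑ a, ∑ w : Fin n → α, f (a :: List.ofFn w) := by
      rw [← (Fin.consEquiv fun _ => α).sum_comp, Fintype.sum_prod_type]
      simp [Fin.consEquiv]
    simpa [wordSeries, coeff_succ_X_mul, coeff_C] using hsplit

end WordSeries

lemma wordSeries_eq_sum_range_mul_add {R : Type*} [CommSemiring R]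
    {f : List Bool → R} {a : R}
    (hf : ∀ j l, f (List.replicate j true ++ false :: l) = f (List.replicate j true) * a * f l)
    (m : ℕ) :
    wordSeries f =
      (∑ j ∈ range m, C (f (List.replicate j true)) * X ^ j) * (1 + C a * X * wordSeries f)
        + X ^ m * wordSeries fun w => f (List.replicate m true ++ w) := by
  induction m with
  | zero => simp
  | succ m ih =>
    have hstep : wordSeries (fun w => f (List.replicate m true ++ w)) =
        C (f (List.replicate m true)) * (1 + C a * X * wordSeries f)
          + X * wordSeries fun w => f (List.replicate (m + 1) true ++ w) := by
      rw [wordSeries_eq_add_X_mul_sum]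
      simp only [Fintype.sum_bool, hf, wordSeries_const_mul, List.replicate_succ',
        List.append_assoc, List.append_nil, List.singleton_append, map_mul]
      ring
    rw [hstep] at ih
    rw [sum_range_succ]
    nth_rewrite 1 [ih]
    ring

section WordWeight

variable {R : Type*} [CommSemiring R] (a b c : R)

/-- The weight of a binary word in which each letter `0` contributes `a`, each letter `1`
contributes `b`, and each maximal run of `1`s contributes an additional factor `c`. -/
def wordWeight (w : List Bool) : R := a ^ w.count false * b ^ wOnes w * c ^ wRuns w

lemma wordWeight_append_false_cons (u v : List Bool) :
    wordWeight a b c (u ++ false :: v) = wordWeight a b c u * a * wordWeight a b c v := by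
  have hzeros : (u ++ false :: v).count false = u.count false + v.count false + 1 := by
    simp [add_assoc]
  have hones : wOnes (u ++ false :: v) = wOnes u + wOnes v := by simp [wOnes]
  rw [wordWeight, hzeros, hones, wRuns_append_false_cons, wordWeight, wordWeight]
  ring

lemma pow_wEdg_mul_pow_wVer (p q : R) (w : List Bool) :
    p ^ wEdg w.length w * q ^ wVer w.length w =
      p * q ^ 2 * wordWeight (p ^ 3 * q ^ 2) (p ^ 5 * q ^ 3) (p * q) w := by
  have hlength : w.length = w.count false + wOnes w := (List.count_false_add_count_true w).symm
  simp only [wEdg, wVer, wordWeight, hlength]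
  ring

/-- The restriction of `wordWeight` to the `k`-bonacci words, extended by zero to all words. -/
def kbonWeight (k : ℕ) (w : List Bool) : R :=
  if List.replicate k true <:+: w then 0 else wordWeight a b c w

lemma kbonWeight_append_false_cons (k : ℕ) (u v : List Bool) :
    kbonWeight a b c k (u ++ false :: v) = kbonWeight a b c k u * a * kbonWeight a b c k v := by
  have hinfix := isInfix_append_cons_iff_of_notMem (a := false) (l := List.replicate k true)
    (by simp) u v
  by_cases hu : List.replicate k true <:+: u <;> by_cases hv : List.replicate k true <:+: v <;>
    simp [kbonWeight, hinfix, hu, hv, wordWeight_append_false_cons]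

lemma kbonWeight_replicate_append (k : ℕ) (l : List Bool) :
    kbonWeight a b c k (List.replicate k true ++ l) = 0 :=
  if_pos (List.prefix_append _ _).isInfix

lemma kbonWeight_replicate_of_lt {j k : ℕ} (hj : j < k) :
    kbonWeight a b c k (List.replicate j true) = wordWeight a b c (List.replicate j true) :=
  if_neg fun h => by simpa [hj.not_ge] using h.length_le

lemma wordSeries_kbonWeight_eq (k : ℕ) :
    wordSeries (kbonWeight a b c k) =
      (∑ j ∈ range k, C (wordWeight a b c (List.replicate j true)) * X ^ j)
        * (1 + C a * X * wordSeries (kbonWeight a b c k)) := by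
  have hsum : ∑ j ∈ range k, C (kbonWeight a b c k (List.replicate j true)) * X ^ j =
      ∑ j ∈ range k, C (wordWeight a b c (List.replicate j true)) * X ^ j :=
    sum_congr rfl fun j hj => by rw [kbonWeight_replicate_of_lt a b c (mem_range.mp hj)]
  have hzero : wordSeries (fun w => kbonWeight a b c k (List.replicate k true ++ w)) = 0 := by
    ext n
    simp [wordSeries, kbonWeight_replicate_append]
  have h := wordSeries_eq_sum_range_mul_add
    (fun j => kbonWeight_append_false_cons a b c k (List.replicate j true)) k
  rwa [hzero, mul_zero, add_zero, hsum] at h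

end WordWeight

section GeneratingFunction

variable {R : Type*} [CommRing R] {k : ℕ}

lemma one_sub_mul_sum_wordWeight_replicate (a b c : R) (hk : 1 ≤ k) :
    (1 - C b * X) * ∑ j ∈ range k, C (wordWeight a b c (List.replicate j true)) * X ^ j =
      1 - C (b - b * c) * X - C (b ^ k * c) * X ^ k := by
  induction k, hk using Nat.le_induction with
  | base =>
    have hnil : wordWeight a b c [] = 1 := by simp [wordWeight, wOnes, wRuns_nil]
    simp only [sum_range_one, List.replicate_zero, hnil, map_sub, map_mul, map_one, pow_one,
      pow_zero]
    ring
  | succ k hk ih =>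
    obtain ⟨j, rfl⟩ := Nat.exists_eq_add_of_le' hk
    have hweight : wordWeight a b c (List.replicate (j + 1) true) = b ^ (j + 1) * c := by
      simp [wordWeight, wOnes, wRuns_replicate_succ, List.count_replicate]
    rw [sum_range_succ, mul_add, ih, hweight]
    simp only [map_mul, map_pow]
    ring

lemma mul_wordSeries_kbonWeight (a b c : R) (hk : 1 ≤ k) :
    (1 - C (a + b) * X + C (a * b * (1 - c)) * X ^ 2 + C (a * b ^ k * c) * X ^ (k + 1))
        * wordSeries (kbonWeight a b c k) =
      1 - C (b - b * c) * X - C (b ^ k * c) * X ^ k := by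
  have hG := wordSeries_kbonWeight_eq a b c k
  have hP := one_sub_mul_sum_wordWeight_replicate a b c hk
  simp only [map_mul, map_pow, map_add, map_sub, map_one] at hP ⊢
  linear_combination (1 - C b * X) * hG + (1 + C a * X * wordSeries (kbonWeight a b c k)) * hP

lemma mk_sum_kbonWords_eq (p q : R) (hk : 1 ≤ k) :
    (PowerSeries.mk fun n => if n = 0 then 0 else
        ∑ w ∈ kbonWords n k, p ^ wEdg n (List.ofFn w) * q ^ wVer n (List.ofFn w)) =
      C (p * q ^ 2)
        * (wordSeries (kbonWeight (p ^ 3 * q ^ 2) (p ^ 5 * q ^ 3) (p * q) k) - 1) := by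
  ext n
  rw [coeff_mk, coeff_C_mul, map_sub, coeff_one, wordSeries, coeff_mk]
  split_ifs with hn
  · subst hn
    simp [kbonWeight, wordWeight, wOnes, wRuns, Nat.ne_of_gt hk]
  · rw [sub_zero, kbonWords, sum_filter, mul_sum]
    refine sum_congr rfl fun w _ => ?_
    have hterm := pow_wEdg_mul_pow_wVer p q (List.ofFn w)
    rw [List.length_ofFn] at hterm
    simp [hterm, kbonWeight]

theorem kbonacci_graph_gf_general (p q : R) (hk : 1 ≤ k) :
    (1 - C (p ^ 3 * q ^ 2 + p ^ 5 * q ^ 3) * X + C (p ^ 8 * q ^ 5 - p ^ 9 * q ^ 6) * X ^ 2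
        + C (p ^ (5 * k + 4) * q ^ (3 * k + 3)) * X ^ (k + 1))
      * PowerSeries.mk (fun n => if n = 0 then 0 else
          ∑ w ∈ kbonWords n k, p ^ wEdg n (List.ofFn w) * q ^ wVer n (List.ofFn w)) =
    C (p ^ 2 * q ^ 3)
      * (C (p ^ 2 * q + p ^ 5 * q ^ 3) * X - C (p ^ 7 * q ^ 4 - p ^ 8 * q ^ 5) * X ^ 2
        - C (p ^ (5 * k) * q ^ (3 * k)) * X ^ k
        - C (p ^ (5 * k + 3) * q ^ (3 * k + 2)) * X ^ (k + 1)) := by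
  have hG := mul_wordSeries_kbonWeight (p ^ 3 * q ^ 2) (p ^ 5 * q ^ 3) (p * q) hk
  rw [mk_sum_kbonWords_eq p q hk]
  simp only [map_mul, map_pow, map_add, map_sub, map_one] at hG ⊢
  linear_combination C p * C q ^ 2 * hG

end GeneratingFunction

theorem kbonacci_graph_gf (k : ℕ) (hk : 2 ≤ k) :
    (1 - PowerSeries.C (R := Rpq) (pvar ^ 3 * qvar ^ 2 + pvar ^ 5 * qvar ^ 3) * PowerSeries.X
        + PowerSeries.C (R := Rpq) (pvar ^ 8 * qvar ^ 5 - pvar ^ 9 * qvar ^ 6) * PowerSeries.X ^ 2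
        + PowerSeries.C (R := Rpq) (pvar ^ (5 * k + 4) * qvar ^ (3 * k + 3)) * PowerSeries.X ^ (k + 1))
      * PowerSeries.mk (fun n =>
          if n = 0 then 0 else
            ∑ w ∈ kbonWords n k,
              pvar ^ wEdg n (List.ofFn w) * qvar ^ wVer n (List.ofFn w))
    = PowerSeries.C (R := Rpq) (pvar ^ 2 * qvar ^ 3)
        * (PowerSeries.C (R := Rpq) (pvar ^ 2 * qvar + pvar ^ 5 * qvar ^ 3) * PowerSeries.X
          - PowerSeries.C (R := Rpq) (pvar ^ 7 * qvar ^ 4 - pvar ^ 8 * qvar ^ 5) * PowerSeries.X ^ 2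
          - PowerSeries.C (R := Rpq) (pvar ^ (5 * k) * qvar ^ (3 * k)) * PowerSeries.X ^ k
          - PowerSeries.C (R := Rpq) (pvar ^ (5 * k + 3) * qvar ^ (3 * k + 2)) * PowerSeries.X ^ (k + 1)) :=
  kbonacci_graph_gf_general pvar qvar (one_le_two.trans hk)
end

section
/- For every integer k ≥ 2, let h_{n,k} be the number of words in F_{n,k} in which every maximal run of consecutive 1's has odd length (the paper proves these are exactly the k-bonacci words whose k-bonacci graph possesses a Hamiltonian cycle). Then the following identity of formal power series in x over ℤ holds: (1 − x − 2x² + x³ + x^{2⌊k/2⌋+2}) · Σ_{n≥1} h_{n,k}·xⁿ = x·(1 + x)·(2 − x − x^{2⌊k/2⌋}). In other words, the generating function for the total number of Hamiltonian k-bonacci graphs is H_k(x) = x(1+x)(2 − x − x^{2⌊k/2⌋})/(1 − x − 2x² + x³ + x^{2⌊k/2⌋+2}). -/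
open Finset

/-- The list of lengths of the maximal runs (blocks) of consecutive `1`s in a binary word. -/
def runLengths : List Bool → List ℕ
  | [] => []
  | false :: l => runLengths l
  | true :: l => ((l.takeWhile (· = true)).length + 1) :: runLengths (l.dropWhile (· = true))
termination_by l => l.length
decreasing_by
  · simp
  · exact Nat.lt_succ_of_le ((List.dropWhile_sublist _).length_le)

/-- Every maximal run of consecutive `1`s in `w` has odd length. -/
def allRunsOdd (w : List Bool) : Prop := ∀ r ∈ runLengths w, Odd r

instance (w : List Bool) : Decidable (allRunsOdd w) := by
  unfold allRunsOdd; infer_instance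

/-- `h_{n,k}`: the number of words in `F_{n,k}` all of whose maximal runs of `1`s have odd
length; by the paper these are exactly the words whose `k`-bonacci graph is Hamiltonian. -/
def hamCount (n k : ℕ) : ℕ :=
  ((kbonWords n k).filter (fun w => allRunsOdd (List.ofFn w))).card

/-!
Reading a word up to its first `0` (or its end) splits it as `1ʲ` or `1ʲ0w`, so if `P` is the
generating function of the allowed values of `j` (with `0` always allowed), the generating function
`A` of the words with allowed runs satisfies `A = P (1 + X A)`. Avoiding `k` consecutive `1`s bounds
every run by `k - 1`, so here `P = 1 + X + X³ + ⋯ + X^(2⌊k/2⌋ - 1)`; multiplying by `1 - X²` makes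
the geometric sum collapse.
-/

open PowerSeries

section Infix

variable {α : Type*} {a : α} {l : List α}

theorem prefix_append_cons_iff_of_notMem (ha : a ∉ l) (u v : List α) :
    l <+: u ++ a :: v ↔ l <+: u := by
  induction l generalizing u with
  | nil => simp
  | cons b l ih =>
    rw [List.mem_cons, not_or] at ha
    obtain ⟨hab, ha⟩ := ha
    cases u with
    | nil => simp [List.cons_prefix_cons, Ne.symm hab]
    | cons c u => simp [List.cons_prefix_cons, ih ha]

theorem infix_append_cons_iff_of_notMem (ha : a ∉ l) (u v : List α) :
    l <:+: u ++ a :: v ↔ l <:+: u ∨ l <:+: v := by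
  induction u with
  | nil =>
    rw [List.nil_append, List.infix_cons_iff, List.infix_nil,
      ← List.prefix_nil, ← prefix_append_cons_iff_of_notMem ha [] v, List.nil_append]
  | cons c u ih =>
    rw [List.cons_append, List.infix_cons_iff, List.infix_cons_iff, ih, ← List.cons_append,
      prefix_append_cons_iff_of_notMem ha, or_assoc]

end Infix

theorem runLengths_replicate_true (j : ℕ) :
    runLengths (List.replicate j true) = if j = 0 then [] else [j] := by
  cases j <;> simp [List.replicate_succ, runLengths]

theorem runLengths_append_false_cons (u v : List Bool) :
    runLengths (u ++ false :: v) = runLengths u ++ runLengths v := by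
  have takeWhile_append (l : List Bool) :
      (l ++ false :: v).takeWhile (· = true) = l.takeWhile (· = true) := by
    induction l with
    | nil => simp
    | cons b l ih => cases b <;> simp_all
  have dropWhile_append (l : List Bool) :
      (l ++ false :: v).dropWhile (· = true) = l.dropWhile (· = true) ++ false :: v := by
    induction l with
    | nil => simp
    | cons b l ih => cases b <;> simp_all
  induction u using runLengths.induct with
  | case1 => simp [runLengths]
  | case2 l ih => simpa [runLengths] using ih
  | case3 l ih =>
    rw [List.cons_append, runLengths, runLengths, takeWhile_append, dropWhile_append, ih,
      List.cons_append]

@[elab_as_elim]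
theorem replicate_true_append_induction {motive : List Bool → Prop}
    (ones : ∀ j, motive (List.replicate j true))
    (ones_append : ∀ j l, motive l → motive (List.replicate j true ++ false :: l))
    (w : List Bool) : motive w := by
  suffices h : ∀ j, motive (List.replicate j true ++ w) from h 0
  induction w with
  | nil => simpa using ones
  | cons b w ih =>
    intro j
    cases b with
    | false => exact ones_append j w (ih 0)
    | true => simpa [List.replicate_succ'] using ih (j + 1)

theorem replicate_true_infix_iff {k : ℕ} (hk : k ≠ 0) (w : List Bool) :
    List.replicate k true <:+: w ↔ ∃ r ∈ runLengths w, k ≤ r := by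
  have infix_ones (j : ℕ) : List.replicate k true <:+: List.replicate j true ↔
      ∃ r ∈ runLengths (List.replicate j true), k ≤ r := by
    rw [List.infix_replicate_iff, runLengths_replicate_true]
    split_ifs with hj <;> simp [hj, hk]
  induction w using replicate_true_append_induction with
  | ones j => exact infix_ones j
  | ones_append j w ih =>
    simp only [infix_append_cons_iff_of_notMem (show false ∉ List.replicate k true by simp), ih,
      infix_ones, runLengths_append_false_cons, List.mem_append, or_and_right, exists_or]

theorem card_filter_ofFn_succ (q : List Bool → Prop) [DecidablePred q] (n : ℕ) :
    #{w : Fin (n + 1) → Bool | q (List.ofFn w)} =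
      #{w : Fin n → Bool | q (false :: List.ofFn w)} +
        #{w : Fin n → Bool | q (true :: List.ofFn w)} := by
  simp only [card_filter]
  rw [← (Fin.consEquiv fun _ : Fin (n + 1) ↦ Bool).sum_comp, Fintype.sum_prod_type,
    Fintype.sum_bool, add_comm]
  simp [Fin.consEquiv, List.ofFn_succ]

/-- The number of words `w` of length `n` such that every maximal run of `1`s in `1ʲw` has its
length in `p`. The prefix `1ʲ` stands for the run being read, which makes the count obey a recursion
on the first letter of `w`; the words themselves are counted at `j = 0`. -/
def runCount (p : ℕ → Prop) [DecidablePred p] (j n : ℕ) : ℕ :=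
  #{w : Fin n → Bool | ∀ r ∈ runLengths (List.replicate j true ++ List.ofFn w), p r}

/-- The generating function of the number `n` of `1`s that may follow `1ʲ` before the first `0` or
the end of the word. The alternative `j + n = 0` is needed because an empty block of `1`s is not
listed by `runLengths`, and so is allowed whatever `p` is. -/
noncomputable def blockSeries (R : Type*) [Semiring R] (p : ℕ → Prop) [DecidablePred p] (j : ℕ) :
    R⟦X⟧ :=
  PowerSeries.mk fun n ↦ if j + n = 0 ∨ p (j + n) then 1 else 0

section RunCount

theorem forall_mem_runLengths_replicate_true (p : ℕ → Prop) (j : ℕ) :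
    (∀ r ∈ runLengths (List.replicate j true), p r) ↔ j = 0 ∨ p j := by
  rw [runLengths_replicate_true]
  split_ifs with hj <;> simp [hj]

variable (p : ℕ → Prop) [DecidablePred p]

theorem runCount_zero_right (j : ℕ) : runCount p j 0 = if j = 0 ∨ p j then 1 else 0 := by
  split_ifs with hj <;> simp [runCount, forall_mem_runLengths_replicate_true, hj]

theorem runCount_succ_right (j n : ℕ) :
    runCount p j (n + 1) =
      (if j = 0 ∨ p j then 1 else 0) * runCount p 0 n + runCount p (j + 1) n := by
  have h_false (l : List Bool) :
      (∀ r ∈ runLengths (List.replicate j true ++ false :: l), p r) ↔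
        (j = 0 ∨ p j) ∧ ∀ r ∈ runLengths l, p r := by
    rw [runLengths_append_false_cons, List.forall_mem_append,
      forall_mem_runLengths_replicate_true]
  have h_true (l : List Bool) :
      List.replicate j true ++ true :: l = List.replicate (j + 1) true ++ l := by
    simp [List.replicate_succ']
  rw [runCount,
    card_filter_ofFn_succ fun l ↦ ∀ r ∈ runLengths (List.replicate j true ++ l), p r]
  simp only [h_false, h_true]
  split_ifs with hj <;> simp [hj, runCount]

variable (R : Type*) [Semiring R]

theorem blockSeries_eq_add_X_mul (j : ℕ) :
    blockSeries R p j = (if j = 0 ∨ p j then 1 else 0) + X * blockSeries R p (j + 1) := by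
  ext (_ | n)
  · split_ifs with hj <;> simp [blockSeries, hj]
  · split_ifs <;> simp [blockSeries, coeff_succ_X_mul, coeff_one, add_assoc, add_comm 1]

theorem mk_runCount_eq_blockSeries_mul (j : ℕ) :
    PowerSeries.mk (fun n ↦ (runCount p j n : R)) =
      blockSeries R p j * (1 + X * PowerSeries.mk fun n ↦ (runCount p 0 n : R)) := by
  ext n
  induction n generalizing j with
  | zero => simp [blockSeries, runCount_zero_right]
  | succ n ih =>
    rw [blockSeries_eq_add_X_mul, add_mul, mul_assoc, map_add, coeff_succ_X_mul, ← ih]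
    split_ifs with hj <;> simp [runCount_succ_right, hj, coeff_succ_X_mul, coeff_one]

end RunCount

theorem blockSeries_odd_lt (R : Type*) [Semiring R] (k : ℕ) :
    blockSeries R (fun r ↦ Odd r ∧ r < k) 0 = 1 + X * ∑ i ∈ range (k / 2), (X ^ 2) ^ i := by
  ext (_ | n)
  · simp [blockSeries]
  · simp only [blockSeries, coeff_mk, map_add, coeff_succ_X_mul, map_sum, ← pow_mul, coeff_X_pow]
    obtain ⟨i, rfl | rfl⟩ := n.even_or_odd'
    · have h_lt : 2 * i + 1 < k ↔ i < k / 2 := by omega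
      simp [coeff_one, h_lt]
    · have h_ne (i' : ℕ) : 2 * i + 1 ≠ 2 * i' := by omega
      have h_even : ¬ Odd (2 * i + 1 + 1) := by simp [parity_simps]
      simp [coeff_one, h_ne, h_even]

theorem hamCount_eq_runCount {k : ℕ} (hk : k ≠ 0) (n : ℕ) :
    hamCount n k = runCount (fun r ↦ Odd r ∧ r < k) 0 n := by
  unfold hamCount kbonWords runCount
  congr 1
  ext w
  simp only [mem_filter, mem_univ, true_and, List.replicate_zero, List.nil_append,
    replicate_true_infix_iff hk, allRunsOdd]
  push Not
  rw [← forall₂_and]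
  simp only [and_comm]

theorem mk_hamCount_eq_mk_runCount_sub_one {k : ℕ} (hk : k ≠ 0) :
    PowerSeries.mk (fun n ↦ if n = 0 then 0 else (hamCount n k : ℤ)) =
      PowerSeries.mk (fun n ↦ (runCount (fun r ↦ Odd r ∧ r < k) 0 n : ℤ)) - 1 := by
  ext (_ | n)
  · simp [runCount_zero_right]
  · simp [hamCount_eq_runCount hk, coeff_one]

theorem hamiltonian_kbonacci_gf (k : ℕ) (hk : 2 ≤ k) :
    (1 - PowerSeries.X - 2 * PowerSeries.X ^ 2 + PowerSeries.X ^ 3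
        + PowerSeries.X ^ (2 * (k / 2) + 2))
      * PowerSeries.mk (fun n => if n = 0 then 0 else (hamCount n k : ℤ))
    = PowerSeries.X * (1 + PowerSeries.X)
        * (2 - PowerSeries.X - PowerSeries.X ^ (2 * (k / 2))) := by
  have hA := mk_runCount_eq_blockSeries_mul (fun r ↦ Odd r ∧ r < k) ℤ 0
  have hP := blockSeries_odd_lt ℤ k
  have h_geom := mul_neg_geom_sum (X ^ 2 : ℤ⟦X⟧) (k / 2)
  rw [mk_hamCount_eq_mk_runCount_sub_one (by omega)]
  set A := PowerSeries.mk fun n ↦ (runCount (fun r ↦ Odd r ∧ r < k) 0 n : ℤ)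
  linear_combination (1 - X ^ 2) * hA + (1 - X ^ 2) * (1 + X * A) * hP + X * (1 + X * A) * h_geom
end
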